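/- Let p, q, r, s > 0 be real numbers with p + q = r + s and sp > rq. Let G = (x₀, y₀) ∈ ℝ² be the point lying on the line through (−p, 0) and (0, r) and also on the line through (q, 0) and (0, −s) (this point exists and is unique since sp ≠ rq). Then x₀ > 0, y₀ > 0, and x₀ + p = y₀ + s. (Equivalently: the smallest axis-parallel rectangle containing the triangle with vertices (−p, 0), (0, −s), G is a square.) -/

import Mathlib

/-!
Put `D = s p - r q`. Eliminating between the equations of the two lines gives
`D x₀ = p q (r + s)` and `D y₀ = r s (p + q)`. Adding `D p` and `D s` respectively, one
finds `D (x₀ + p) = s p (p + q)` and `D (y₀ + s) = s p (r + s)`, so the sides of the rectangle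
are in the ratio `(p + q) : (r + s)`.
-/

open scoped Affine

section Line

variable {R : Type*} [CommRing R]

theorem mk_mem_line_iff {x y x₁ y₁ x₂ y₂ : R} :
    (x, y) ∈ line[R, (x₁, y₁), (x₂, y₂)] ↔
      ∃ t : R, x = (1 - t) * x₁ + t * x₂ ∧ y = (1 - t) * y₁ + t * y₂ := by
  simp only [mem_affineSpan_pair_iff_exists_lineMap_eq, AffineMap.lineMap_apply_module,
    Prod.smul_mk, Prod.mk_add_mk, smul_eq_mul, Prod.mk.injEq, eq_comm]

theorem intercept_equation_of_mem_line {u v x y : R} (h : (x, y) ∈ line[R, (u, 0), (0, v)]) :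
    v * x + u * y = u * v := by
  obtain ⟨t, rfl, rfl⟩ := mk_mem_line_iff.mp h
  ring

end Line

section Intersection

variable {R : Type*} [CommRing R] {p q r s x y : R}

theorem det_mul_fst_eq (h₁ : (x, y) ∈ line[R, (-p, 0), (0, r)])
    (h₂ : (x, y) ∈ line[R, (q, 0), (0, -s)]) : (s * p - r * q) * x = p * q * (r + s) := by
  linear_combination
    -q * intercept_equation_of_mem_line h₁ - p * intercept_equation_of_mem_line h₂

theorem det_mul_snd_eq (h₁ : (x, y) ∈ line[R, (-p, 0), (0, r)])
    (h₂ : (x, y) ∈ line[R, (q, 0), (0, -s)]) : (s * p - r * q) * y = r * s * (p + q) := by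
  linear_combination
    -s * intercept_equation_of_mem_line h₁ - r * intercept_equation_of_mem_line h₂

theorem det_mul_width_eq (h₁ : (x, y) ∈ line[R, (-p, 0), (0, r)])
    (h₂ : (x, y) ∈ line[R, (q, 0), (0, -s)]) : (s * p - r * q) * (x + p) = s * p * (p + q) := by
  linear_combination det_mul_fst_eq h₁ h₂

theorem det_mul_height_eq (h₁ : (x, y) ∈ line[R, (-p, 0), (0, r)])
    (h₂ : (x, y) ∈ line[R, (q, 0), (0, -s)]) : (s * p - r * q) * (y + s) = s * p * (r + s) := by
  linear_combination det_mul_snd_eq h₁ h₂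

theorem width_eq_height_iff [IsCancelMulZero R] (hD : s * p - r * q ≠ 0) (hsp : s * p ≠ 0)
    (h₁ : (x, y) ∈ line[R, (-p, 0), (0, r)]) (h₂ : (x, y) ∈ line[R, (q, 0), (0, -s)]) :
    x + p = y + s ↔ p + q = r + s := by
  rw [← mul_right_inj' hD, det_mul_width_eq h₁ h₂, det_mul_height_eq h₁ h₂, mul_right_inj' hsp]

end Intersection

theorem pappus_square_general {R : Type*} [CommRing R] [LinearOrder R] [IsStrictOrderedRing R]
    {p q r s x y : R} (hp : 0 < p) (hq : 0 < q) (hr : 0 < r) (hs : 0 < s)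
    (hdet : r * q < s * p) (h₁ : (x, y) ∈ line[R, (-p, 0), (0, r)])
    (h₂ : (x, y) ∈ line[R, (q, 0), (0, -s)]) :
    0 < x ∧ 0 < y ∧ (x + p = y + s ↔ p + q = r + s) := by
  have hD : 0 < s * p - r * q := sub_pos.mpr hdet
  have hx : 0 < (s * p - r * q) * x := by rw [det_mul_fst_eq h₁ h₂]; positivity
  have hy : 0 < (s * p - r * q) * y := by rw [det_mul_snd_eq h₁ h₂]; positivity
  exact ⟨pos_of_mul_pos_right hx hD.le, pos_of_mul_pos_right hy hD.le,
    width_eq_height_iff hD.ne' (mul_pos hs hp).ne' h₁ h₂⟩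

/-- Let `p, q, r, s > 0` with `p + q = r + s` and `s*p > r*q`. If
`G = (x₀, y₀)` lies on the line through `(-p, 0)` and `(0, r)` and on the line through
`(q, 0)` and `(0, -s)`, then `x₀ > 0`, `y₀ > 0`, and `x₀ + p = y₀ + s` (so the smallest
axis-parallel rectangle containing the triangle with vertices `(-p, 0)`, `(0, -s)`, `G` is
a square). -/
theorem pappus_square (p q r s : ℝ) (hp : 0 < p) (hq : 0 < q) (hr : 0 < r) (hs : 0 < s)
    (hsum : p + q = r + s) (hdet : r * q < s * p) (x₀ y₀ : ℝ)
    (hline₁ : ∃ a : ℝ, x₀ = (1 - a) * (-p) + a * 0 ∧ y₀ = (1 - a) * 0 + a * r)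
    (hline₂ : ∃ b : ℝ, x₀ = (1 - b) * q + b * 0 ∧ y₀ = (1 - b) * 0 + b * (-s)) :
    0 < x₀ ∧ 0 < y₀ ∧ x₀ + p = y₀ + s := by
  obtain ⟨hx, hy, hsquare⟩ := pappus_square_general hp hq hr hs hdet
    (mk_mem_line_iff.mpr hline₁) (mk_mem_line_iff.mpr hline₂)
  exact ⟨hx, hy, hsquare.mpr hsum⟩
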